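/- arXiv:0909.0244 — 2 statements merged into one kernel-verified Lean document; each statement's English description precedes it below -/
import Mathlib

section
/- Let l ∈ R_1 and y ∈ R_1 be strong Lefschetz elements for the finite length graded R-modules M and N respectively. If the Hilbert functions of M and N are both symmetric (h_d = h_{p−d} for all d, where p is the respective socle degree), then M ⊗_k N has the strong Lefschetz property and its Hilbert function is symmetric. -/
open MvPolynomial TensorProduct

/-- `gr` is a grading making `M` a graded module over the standard graded polynomial ring
`k[x_1, …, x_n]`: `M` is the internal direct sum of the subspaces `gr i`, and homogeneous
polynomials of degree `i` map `gr j` into `gr (i + j)`. -/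
def IsGrading (k : Type*) [Field k] (n : ℕ) {M : Type*} [AddCommGroup M] [Module k M]
    [Module (MvPolynomial (Fin n) k) M] (gr : ℕ → Submodule k M) : Prop :=
  DirectSum.IsInternal gr ∧
    ∀ (i j : ℕ) (r : MvPolynomial (Fin n) k), r ∈ homogeneousSubmodule (Fin n) k i →
      ∀ x ∈ gr j, r • x ∈ gr (i + j)

/-- The scalar `z` satisfies the strong Lefschetz condition for the grading `gr`:
for all nonnegative `a` and `d`, multiplication by `z ^ a` maps `gr d` to `gr (d + a)`
injectively or surjectively. -/
def IsSLAction {k A T : Type*} [Field k] [CommRing A] [AddCommGroup T] [Module k T]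
    [Module A T] (gr : ℕ → Submodule k T) (z : A) : Prop :=
  ∀ a d : ℕ, (∀ x ∈ gr d, z ^ a • x = 0 → x = 0) ∨
    (∀ w ∈ gr (d + a), ∃ x ∈ gr d, z ^ a • x = w)

/-- The data `(iv α, dv α, e α)` exhibits a degree-zero decomposition
`T ≅ ⊕_α k[z](-(iv α))/(z^(dv α))` of the graded module `T` as a graded `k[z]`-module:
each `e α` is homogeneous of degree `iv α`, is killed by `z ^ dv α`, the elements
`z ^ j • e α` (`j < dv α`) are homogeneous of degree `iv α + j` and form a `k`-basis of `T`. -/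
def IsDecomp {k A T : Type*} [Field k] [CommRing A] [AddCommGroup T] [Module k T]
    [Module A T] (gr : ℕ → Submodule k T) (z : A) {Λ : Type*} (iv dv : Λ → ℕ)
    (e : Λ → T) : Prop :=
  (∀ α, 1 ≤ dv α) ∧ (∀ (α : Λ) (j : ℕ), j < dv α → z ^ j • e α ∈ gr (iv α + j)) ∧
    (∀ α, z ^ dv α • e α = 0) ∧
    LinearIndependent k (fun q : Σ α : Λ, Fin (dv α) => z ^ (q.2 : ℕ) • e q.1) ∧
    Submodule.span k (Set.range (fun q : Σ α : Λ, Fin (dv α) => z ^ (q.2 : ℕ) • e q.1)) = ⊤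

/-- `p` is the socle degree of the graded module with grading `gr`:
the largest degree in which the module is nonzero. -/
def IsSocleDegree {k T : Type*} [Field k] [AddCommGroup T] [Module k T]
    (gr : ℕ → Submodule k T) (p : ℕ) : Prop :=
  gr p ≠ ⊥ ∧ ∀ e : ℕ, p < e → gr e = ⊥

/-- The partial order on the cyclic summands of a decomposition:
`S_β ⪯ S_α` iff `iv α ≤ iv β` and `dv β + iv β ≤ dv α + iv α`. -/
def Prec {Λ : Type*} (iv dv : Λ → ℕ) (β α : Λ) : Prop :=
  iv α ≤ iv β ∧ dv β + iv β ≤ dv α + iv α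

/-- A decomposition with data `(iv, dv)` is almost centered if whenever `S_β ⪯ S_α` one has
`|L_{αβ} - R_{αβ}| ≤ 1`, where `L_{αβ} = iv β - iv α` and
`R_{αβ} = (dv α + iv α) - (dv β + iv β)`. -/
def AlmostCentered {Λ : Type*} (iv dv : Λ → ℕ) : Prop :=
  ∀ α β : Λ, Prec iv dv β α →
    |((iv β : ℤ) - (iv α : ℤ)) - (((dv α : ℤ) + (iv α : ℤ)) - ((dv β : ℤ) + (iv β : ℤ)))| ≤ 1

/-- The strong Lefschetz condition for an endomorphism `f` (the action of a scalar on a module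
realized as an endomorphism): for all nonnegative `a` and `d`, the map `f ^ a` sends `gr d`
to `gr (d + a)` injectively or surjectively. -/
def IsSLEnd {k T : Type*} [Field k] [AddCommGroup T] [Module k T]
    (gr : ℕ → Submodule k T) (f : Module.End k T) : Prop :=
  ∀ a d : ℕ, (∀ x ∈ gr d, (f ^ a) x = 0 → x = 0) ∨
    (∀ w ∈ gr (d + a), ∃ x ∈ gr d, (f ^ a) x = w)

/-- A degree-zero decomposition `T ≅ ⊕_α k[z](-(iv α))/(z^(dv α))` of `T` as a graded
`k[z]`-module, where `z` acts via the endomorphism `f`. -/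
def IsDecompEnd {k T : Type*} [Field k] [AddCommGroup T] [Module k T]
    (gr : ℕ → Submodule k T) (f : Module.End k T) {Λ : Type*} (iv dv : Λ → ℕ)
    (e : Λ → T) : Prop :=
  (∀ α, 1 ≤ dv α) ∧ (∀ (α : Λ) (j : ℕ), j < dv α → (f ^ j) (e α) ∈ gr (iv α + j)) ∧
    (∀ α, (f ^ dv α) (e α) = 0) ∧
    LinearIndependent k (fun q : Σ α : Λ, Fin (dv α) => (f ^ (q.2 : ℕ)) (e q.1)) ∧
    Submodule.span k (Set.range (fun q : Σ α : Λ, Fin (dv α) => (f ^ (q.2 : ℕ)) (e q.1))) = ⊤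

/-- The total-degree grading on `M ⊗_k N`: the degree `e` piece is spanned by the tensors
`x ⊗ y` with `x, y` homogeneous of degrees summing to `e`. -/
def tensorGr {k : Type*} [Field k] {M N : Type*} [AddCommGroup M] [Module k M]
    [AddCommGroup N] [Module k N] (grM : ℕ → Submodule k M) (grN : ℕ → Submodule k N)
    (e : ℕ) : Submodule k (M ⊗[k] N) :=
  Submodule.span k {t | ∃ (d₁ d₂ : ℕ) (x : M) (y : N), d₁ + d₂ = e ∧ x ∈ grM d₁ ∧
    y ∈ grN d₂ ∧ t = x ⊗ₜ[k] y}

/-- The action of the ring `R ⊗_k R` on `M ⊗_k N`, where the first factor acts on `M` and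
the second on `N`, realized as a `k`-algebra homomorphism into the endomorphisms. -/
noncomputable def tensorAct (k : Type*) [Field k] {n : ℕ} (M N : Type*) [AddCommGroup M]
    [Module k M] [Module (MvPolynomial (Fin n) k) M]
    [IsScalarTower k (MvPolynomial (Fin n) k) M]
    [AddCommGroup N] [Module k N] [Module (MvPolynomial (Fin n) k) N]
    [IsScalarTower k (MvPolynomial (Fin n) k) N] :
    (MvPolynomial (Fin n) k) ⊗[k] (MvPolynomial (Fin n) k) →ₐ[k]
      Module.End k (M ⊗[k] N) :=
  (Module.endTensorEndAlgHom (R := k) (S := k) (A := k)).comp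
    (Algebra.TensorProduct.map (Algebra.lsmul k k M (A := MvPolynomial (Fin n) k))
      (Algebra.lsmul k k N (A := MvPolynomial (Fin n) k)))

/-- Linear forms of `R ⊗_k R`: elements `r ⊗ 1 + 1 ⊗ s` with `r, s` linear forms of `R`. -/
def IsLinearForm2 {k : Type*} [Field k] {n : ℕ}
    (w : (MvPolynomial (Fin n) k) ⊗[k] (MvPolynomial (Fin n) k)) : Prop :=
  ∃ r s : MvPolynomial (Fin n) k, r ∈ homogeneousSubmodule (Fin n) k 1 ∧
    s ∈ homogeneousSubmodule (Fin n) k 1 ∧ w = r ⊗ₜ[k] (1 : MvPolynomial (Fin n) k) +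
      (1 : MvPolynomial (Fin n) k) ⊗ₜ[k] s

/-!
When the Hilbert function is symmetric about `p / 2`, the strong Lefschetz condition for a
degree-one endomorphism `E` amounts to the hard Lefschetz property: `E ^ (p - 2 * d)` is bijective
from degree `d` to degree `p - d`. This in turn holds exactly when `E` is the raising operator of an
action of `sl₂` in which degree `d` has weight `2 * d - p`. Such actions on `M` and `N` add up to
one on `M ⊗ N`, with weights `2 * d - (p + q)`, so the property passes to `M ⊗ N`.

To construct the lowering operator, let `H` be the weight operator, `π_d` the projection onto degree
`d`, and `G_d` the inverse of `E ^ m : gr d → gr (d + m)`, extended by zero, where `m = p - 2 * d`.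
The sum `A_d = ∑ E ^ i * G_d * E ^ (m - 1 - i)` over `i < m` telescopes under the bracket:
`[E, A_d] = [E ^ m, G_d] = π_(p - d) - π_d`. Since `H = ∑ (p - 2 * d) (π_(p - d) - π_d)` over
`d ≤ p / 2`, the operator `F = ∑ (p - 2 * d) A_d` satisfies `[E, F] = H`.

Conversely, suppose `v` has weight `-m`, `s < m` and `E ^ (s + 1) v = 0`. Then `E ^ s` kills
`F E v - s (s + 1 - m) v`, which vanishes by induction on `s`. So `F E` acts on `v` by the scalar
`s (s + 1 - m)`, hence `E F` acts by `(s + 1) (s - m) ≠ 0`, and the same applies to `F v`, `F² v`,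
and so on; as `F` is nilpotent, `v = 0`.
-/

section BijOn

variable {R V W : Type*} [Ring R] [AddCommGroup V] [Module R V] [AddCommGroup W] [Module R W]
  {f : V →ₗ[R] W} {P : Submodule R V} {Q : Submodule R W}

/-- The linear equivalence between two submodules given by a linear map that restricts to a
bijection between them. -/
noncomputable def linearEquivOfBijOn (hf : Set.BijOn f P Q) : P ≃ₗ[R] Q :=
  LinearEquiv.ofBijective (f.restrict hf.mapsTo)
    ⟨hf.mapsTo.restrict_inj.2 hf.injOn, hf.mapsTo.restrict_surjective_iff.2 hf.surjOn⟩

theorem finrank_eq_of_bijOn (hf : Set.BijOn f P Q) : Module.finrank R P = Module.finrank R Q :=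
  (linearEquivOfBijOn hf).finrank_eq

end BijOn

section LinearAlgebra

variable {k V W : Type*} [Field k] [AddCommGroup V] [Module k V] [AddCommGroup W] [Module k W]

theorem finrank_le_finrank_of_mapsTo_of_injOn {f : V →ₗ[k] W} {P : Submodule k V}
    {Q : Submodule k W} [FiniteDimensional k Q] (hf : Set.MapsTo f P Q) (hinj : Set.InjOn f P) :
    Module.finrank k P ≤ Module.finrank k Q :=
  LinearMap.finrank_le_finrank_of_injective (f := f.restrict hf) (hf.restrict_inj.2 hinj)

theorem bijOn_of_injOn_or_surjOn {f : V →ₗ[k] W} {P : Submodule k V} {Q : Submodule k W}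
    [FiniteDimensional k P] [FiniteDimensional k Q] (hf : Set.MapsTo f P Q)
    (hrank : Module.finrank k P = Module.finrank k Q)
    (h : Set.InjOn f P ∨ Set.SurjOn f P Q) : Set.BijOn f P Q := by
  have hiff : Set.InjOn f P ↔ Set.SurjOn f P Q := by
    rw [← hf.restrict_inj, ← hf.restrict_surjective_iff]
    exact LinearMap.injective_iff_surjective_of_finrank_eq_finrank (f := f.restrict hf) hrank
  exact ⟨hf, h.elim id hiff.2, h.elim hiff.1 id⟩

theorem tmul_ne_zero {x : V} {y : W} (hx : x ≠ 0) (hy : y ≠ 0) : x ⊗ₜ[k] y ≠ 0 := by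
  obtain ⟨φ, hφ⟩ := Module.Projective.exists_dual_ne_zero k hx
  obtain ⟨ψ, hψ⟩ := Module.Projective.exists_dual_ne_zero k hy
  intro h
  have : φ x * ψ y = 0 := by
    simpa using congrArg (TensorProduct.dualDistrib k V W (φ ⊗ₜ ψ)) h
  exact mul_ne_zero hφ hψ this

end LinearAlgebra

section InternalGrading

variable {ι R M : Type*} [DecidableEq ι] [Ring R] [AddCommGroup M] [Module R M]
  {gr : ι → Submodule R M} (hgr : DirectSum.IsInternal gr)

include hgr in
theorem ext_of_isInternal {φ ψ : Module.End R M} (h : ∀ d, ∀ x ∈ gr d, φ x = ψ x) : φ = ψ := by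
  have hle : ⨆ d, gr d ≤ LinearMap.eqLocus φ ψ := iSup_le h
  rw [hgr.submodule_iSup_eq_top] at hle
  exact LinearMap.ext fun x ↦ hle Submodule.mem_top

/-- The linear map sending an element of an internally graded module to its component of
degree `d`. -/
noncomputable def homogeneousComponent (d : ι) : M →ₗ[R] gr d :=
  DirectSum.component R ι (fun i ↦ gr i) d ∘ₗ
    (LinearEquiv.ofBijective (DirectSum.coeLinearMap gr) hgr).symm.toLinearMap

/-- The idempotent endomorphism of an internally graded module projecting onto the piece of
degree `d`. -/
noncomputable def homogeneousProj (d : ι) : Module.End R M :=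
  (gr d).subtype ∘ₗ homogeneousComponent hgr d

theorem homogeneousComponent_of_mem {d : ι} {x : M} (hx : x ∈ gr d) :
    homogeneousComponent hgr d x = ⟨x, hx⟩ :=
  hgr.ofBijective_coeLinearMap_of_mem hx

theorem homogeneousComponent_of_mem_ne {d e : ι} (hed : e ≠ d) {x : M} (hx : x ∈ gr e) :
    homogeneousComponent hgr d x = 0 :=
  hgr.ofBijective_coeLinearMap_of_mem_ne hed hx

theorem homogeneousProj_of_mem {d : ι} {x : M} (hx : x ∈ gr d) : homogeneousProj hgr d x = x :=
  congrArg Subtype.val (homogeneousComponent_of_mem hgr hx)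

theorem homogeneousProj_of_mem_ne {d e : ι} (hed : e ≠ d) {x : M} (hx : x ∈ gr e) :
    homogeneousProj hgr d x = 0 :=
  congrArg Subtype.val (homogeneousComponent_of_mem_ne hgr hed hx)

end InternalGrading

section CommutatorBracket

attribute [local instance] LieRing.ofAssociativeRing

section AdEigenvectors

variable {R A : Type*} [CommRing R] [Ring A] [Algebra R A] {h x y : A} {a b : R}

theorem lie_mul_of_lie_eq_smul (hx : ⁅h, x⁆ = a • x) (hy : ⁅h, y⁆ = b • y) :
    ⁅h, x * y⁆ = (a + b) • (x * y) := by
  have leibniz : ⁅h, x * y⁆ = ⁅h, x⁆ * y + x * ⁅h, y⁆ := by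
    simp only [Ring.lie_def]
    noncomm_ring
  rw [leibniz, hx, hy, smul_mul_assoc, mul_smul_comm, add_smul]

theorem lie_pow_of_lie_eq_smul (hx : ⁅h, x⁆ = a • x) (n : ℕ) :
    ⁅h, x ^ n⁆ = (n * a) • x ^ n := by
  induction n with
  | zero => simp [Ring.lie_def]
  | succ n ih =>
    rw [pow_succ, lie_mul_of_lie_eq_smul ih hx]
    congr 1
    push_cast
    ring

theorem isNilpotent_of_lie_eq_smul {k A : Type*} [Field k] [CharZero k] [Ring A] [Algebra k A]
    [FiniteDimensional k A] {h x : A} {a : k} (ha : a ≠ 0) (hx : ⁅h, x⁆ = a • x) :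
    IsNilpotent x := by
  by_contra hnil
  have hne (n : ℕ) : x ^ n ≠ 0 := fun hn ↦ hnil ⟨n, hn⟩
  have heig (n : ℕ) : (LieAlgebra.ad k A h).HasEigenvalue (n * a) :=
    Module.End.hasEigenvalue_of_hasEigenvector
      ⟨Module.End.mem_eigenspace_iff.2 (lie_pow_of_lie_eq_smul hx n), hne n⟩
  have hinj : Function.Injective fun n : ℕ ↦ (n * a : k) :=
    (mul_left_injective₀ ha).comp Nat.cast_injective
  exact Set.infinite_of_injective_forall_mem hinj heig
    (Module.End.finite_hasEigenvalue (LieAlgebra.ad k A h))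

theorem mapsTo_eigenspace_of_lie_eq_smul {V : Type*} [AddCommGroup V] [Module R V]
    {h x : Module.End R V} (hx : ⁅h, x⁆ = a • x) (μ : R) :
    Set.MapsTo x (h.eigenspace μ) (h.eigenspace (μ + a)) := by
  intro v hv
  rw [SetLike.mem_coe, Module.End.mem_eigenspace_iff] at hv ⊢
  have hcomm : h (x v) - x (h v) = a • x v := LinearMap.congr_fun hx v
  rw [hv, map_smul, sub_eq_iff_eq_add'] at hcomm
  rw [hcomm, add_smul]

theorem lie_sum_pow_mul_mul_pow (e g : A) (m : ℕ) :
    ⁅e, ∑ i ∈ Finset.range m, e ^ i * g * e ^ (m - 1 - i)⁆ = ⁅e ^ m, g⁆ := by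
  have h := LinearMap.congr_fun ((LinearMap.commute_mulLeft_right (R := ℤ) e e).mul_geom_sum₂ m) g
  simpa [Ring.lie_def, LinearMap.pow_mulLeft, LinearMap.pow_mulRight, mul_assoc, Finset.mul_sum,
    Finset.sum_mul] using h

end AdEigenvectors

/-- The relations of an `sl₂`-triple. Unlike Mathlib's `IsSl2Triple`, the element `h` may be zero,
as it is for the action on a graded module concentrated in a single degree. -/
structure Sl2Relations {L : Type*} [LieRing L] (h e f : L) : Prop where
  lie_e_f : ⁅e, f⁆ = h
  lie_h_e : ⁅h, e⁆ = 2 • e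
  lie_h_f : ⁅h, f⁆ = -(2 • f)

namespace Sl2Relations

theorem symm {L : Type*} [LieRing L] {h e f : L} (t : Sl2Relations h e f) :
    Sl2Relations (-h) f e where
  lie_e_f := by rw [← lie_skew, t.lie_e_f]
  lie_h_e := by rw [neg_lie, t.lie_h_f, neg_neg]
  lie_h_f := by rw [neg_lie, t.lie_h_e]

section Representation

variable {R V : Type*} [CommRing R] [AddCommGroup V] [Module R V] {h e f : Module.End R V}

theorem lie_h_e_smul (t : Sl2Relations h e f) : ⁅h, e⁆ = (2 : R) • e := by
  rw [t.lie_h_e, ofNat_smul_eq_nsmul R 2 e]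

theorem lie_h_f_smul (t : Sl2Relations h e f) : ⁅h, f⁆ = (-2 : R) • f := by
  rw [t.lie_h_f, neg_smul, ofNat_smul_eq_nsmul R 2 f]

theorem e_f_apply (t : Sl2Relations h e f) (v : V) : e (f v) = f (e v) + h v := by
  have : e (f v) - f (e v) = h v := LinearMap.congr_fun t.lie_e_f v
  rw [← this, add_sub_cancel]

theorem mapsTo_pow_e (t : Sl2Relations h e f) (n : ℕ) (μ : R) :
    Set.MapsTo (e ^ n) (h.eigenspace μ) (h.eigenspace (μ + n * 2)) :=
  mapsTo_eigenspace_of_lie_eq_smul (lie_pow_of_lie_eq_smul t.lie_h_e_smul n) μ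

theorem pow_e_f_e_apply (t : Sl2Relations h e f) {μ : R} {v : V} (hv : v ∈ h.eigenspace μ)
    (n : ℕ) :
    (e ^ n) (f (e v)) = f ((e ^ (n + 1)) v) + (n * (μ + n + 1)) • (e ^ n) v := by
  induction n with
  | zero => simp
  | succ n ih =>
    have hweight : h ((e ^ (n + 1)) v) = (μ + (n + 1 : ℕ) * 2) • (e ^ (n + 1)) v :=
      Module.End.mem_eigenspace_iff.1 (t.mapsTo_pow_e (n + 1) μ hv)
    calc (e ^ (n + 1)) (f (e v))
        = e (f ((e ^ (n + 1)) v)) + (n * (μ + n + 1)) • (e ^ (n + 1)) v := by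
          rw [pow_succ', Module.End.mul_apply, ih, map_add, map_smul, pow_succ' e n,
            Module.End.mul_apply]
      _ = f ((e ^ (n + 1 + 1)) v) + ((μ + (n + 1 : ℕ) * 2) • (e ^ (n + 1)) v +
            (n * (μ + n + 1)) • (e ^ (n + 1)) v) := by
          rw [t.e_f_apply, hweight, pow_succ' e (n + 1), Module.End.mul_apply, add_assoc]
      _ = _ := by
          rw [← add_smul]
          congr 2
          push_cast
          ring

end Representation

section HardLefschetz

variable {k V : Type*} [Field k] [CharZero k] [AddCommGroup V] [Module k V]
  {h e f : Module.End k V}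

-- `f v` satisfies the hypotheses with `(m + 2, j + 1)` in place of `(m, j)`.
theorem eq_zero_of_f_e_apply_eq_smul (t : Sl2Relations h e f) {m j : ℕ} (hjm : j < m) {v : V}
    (hv : v ∈ h.eigenspace (-m : k)) (hfe : f (e v) = (j * (j + 1 - m) : k) • v) {r : ℕ}
    (hr : (f ^ r) v = 0) : v = 0 := by
  induction r generalizing m j v with
  | zero => simpa using hr
  | succ r ih =>
    have hef : e (f v) = ((j + 1) * (j - m) : k) • v := by
      rw [t.e_f_apply, hfe, Module.End.mem_eigenspace_iff.1 hv, ← add_smul]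
      congr 1
      ring
    have hfv : f v = 0 := by
      refine ih (m := m + 2) (j := j + 1) (by omega) ?_ ?_ (by rwa [pow_succ] at hr)
      · convert mapsTo_eigenspace_of_lie_eq_smul t.lie_h_f_smul (-m : k) hv using 1
        rw [SetLike.mem_coe]
        push_cast
        ring_nf
      · rw [hef, map_smul]
        congr 1
        push_cast
        ring
    have hcoeff : ((j + 1) * (j - m) : k) ≠ 0 :=
      mul_ne_zero (Nat.cast_add_one_ne_zero j) (sub_ne_zero.2 (Nat.cast_injective.ne hjm.ne))
    rw [hfv, map_zero] at hef
    exact (smul_eq_zero.1 hef.symm).resolve_left hcoeff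

variable [FiniteDimensional k V]

theorem eq_zero_of_pow_e_apply_eq_zero (t : Sl2Relations h e f) {m s : ℕ} (hs : s ≤ m) {v : V}
    (hv : v ∈ h.eigenspace (-m : k)) (h0 : (e ^ s) v = 0) : v = 0 := by
  induction s generalizing v with
  | zero => simpa using h0
  | succ s ih =>
    obtain ⟨r, hr⟩ : IsNilpotent f := isNilpotent_of_lie_eq_smul (by simp) t.lie_h_f_smul
    have hfev : f (e v) ∈ h.eigenspace (-m : k) := by
      simpa using mapsTo_eigenspace_of_lie_eq_smul t.lie_h_f_smul _
        (mapsTo_eigenspace_of_lie_eq_smul t.lie_h_e_smul _ hv)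
    have hfe : f (e v) = (s * (s + 1 - m) : k) • v := by
      refine sub_eq_zero.1 (ih (by omega) (sub_mem hfev (Submodule.smul_mem _ _ hv)) ?_)
      rw [map_sub, map_smul, t.pow_e_f_e_apply hv, h0, map_zero, zero_add, ← sub_smul]
      convert zero_smul k _ using 2
      ring
    exact t.eq_zero_of_f_e_apply_eq_smul hs hv hfe (r := r) (by simp [hr])

theorem injOn_pow_e (t : Sl2Relations h e f) (m : ℕ) :
    Set.InjOn (e ^ m) (h.eigenspace (-m : k)) :=
  LinearMap.disjoint_ker_iff_injOn.1 <| LinearMap.disjoint_ker.2 fun _ hv h0 ↦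
    t.eq_zero_of_pow_e_apply_eq_zero le_rfl hv h0

theorem bijOn_pow_e (t : Sl2Relations h e f) (m : ℕ) :
    Set.BijOn (e ^ m) (h.eigenspace (-m : k)) (h.eigenspace (m : k)) := by
  have hneg (μ : k) : (-h).eigenspace μ = h.eigenspace (-μ) := by
    ext v
    simp [neg_eq_iff_eq_neg]
  have he : Set.MapsTo (e ^ m) (h.eigenspace (-m : k)) (h.eigenspace (m : k)) := by
    convert t.mapsTo_pow_e m (-m : k) using 3
    ring
  have hf : Set.MapsTo (f ^ m) (h.eigenspace (m : k)) (h.eigenspace (-m : k)) := by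
    convert t.symm.mapsTo_pow_e m (-m : k) using 2 <;> rw [hneg] <;> ring_nf
  have hfinj : Set.InjOn (f ^ m) (h.eigenspace (m : k)) := by
    simpa [hneg] using t.symm.injOn_pow_e m
  exact bijOn_of_injOn_or_surjOn he
    ((finrank_le_finrank_of_mapsTo_of_injOn he (t.injOn_pow_e m)).antisymm
      (finrank_le_finrank_of_mapsTo_of_injOn hf hfinj)) (.inl (t.injOn_pow_e m))

end HardLefschetz

end Sl2Relations

section Tensor

variable {R M N : Type*} [CommRing R] [AddCommGroup M] [Module R M] [AddCommGroup N] [Module R N]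

theorem lie_rTensor_add_lTensor (x y : Module.End R M) (x' y' : Module.End R N) :
    ⁅x.rTensor N + x'.lTensor M, y.rTensor N + y'.lTensor M⁆ =
      ⁅x, y⁆.rTensor N + ⁅x', y'⁆.lTensor M := by
  ext m n
  simp only [Ring.lie_def, TensorProduct.AlgebraTensorModule.curry_apply,
    LinearMap.restrictScalars_self, TensorProduct.curry_apply, LinearMap.sub_apply,
    LinearMap.add_apply, Module.End.mul_apply, LinearMap.rTensor_tmul, LinearMap.lTensor_tmul,
    map_add, TensorProduct.sub_tmul, TensorProduct.tmul_sub]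
  abel

theorem Sl2Relations.tensor {h e f : Module.End R M} {h' e' f' : Module.End R N}
    (t : Sl2Relations h e f) (t' : Sl2Relations h' e' f') :
    Sl2Relations (h.rTensor N + h'.lTensor M) (e.rTensor N + e'.lTensor M)
      (f.rTensor N + f'.lTensor M) where
  lie_e_f := by rw [lie_rTensor_add_lTensor, t.lie_e_f, t'.lie_e_f]
  lie_h_e := by
    rw [lie_rTensor_add_lTensor, t.lie_h_e, t'.lie_h_e]
    simp only [two_nsmul, LinearMap.rTensor_add, LinearMap.lTensor_add]
    abel
  lie_h_f := by
    rw [lie_rTensor_add_lTensor, t.lie_h_f, t'.lie_h_f]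
    simp only [two_nsmul, LinearMap.rTensor_add, LinearMap.lTensor_add, LinearMap.rTensor_neg,
      LinearMap.lTensor_neg]
    abel

end Tensor

section GradedEndomorphisms

variable {k T : Type*} [Field k] [AddCommGroup T] [Module k T] {gr : ℕ → Submodule k T}
  {p : ℕ} {f : Module.End k T}

/-- The Hilbert function `d ↦ dim_k (gr d)` is symmetric about `p / 2`. Only the degrees up to `p`
are constrained, because `p - d` is a truncated subtraction. -/
def HasSymmetricHilbertFunction (gr : ℕ → Submodule k T) (p : ℕ) : Prop :=
  ∀ d ≤ p, Module.finrank k (gr d) = Module.finrank k (gr (p - d))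

/-- The hard Lefschetz property of `f` about the middle degree `p / 2`: the power
`f ^ (p - 2 * d)` is a bijection from degree `d` to degree `p - d`. The exponent `m` stands for
`p - 2 * d`, which avoids truncated subtraction. -/
def HasHardLefschetz (gr : ℕ → Submodule k T) (p : ℕ) (f : Module.End k T) : Prop :=
  ∀ d m : ℕ, 2 * d + m = p → Set.BijOn (f ^ m) (gr d) (gr (d + m))

/-- The grading is the weight space decomposition of `h`, where degree `d` has weight
`2 * d - p`. -/
def IsWeightGrading (gr : ℕ → Submodule k T) (p : ℕ) (h : Module.End k T) : Prop :=
  ∀ d : ℕ, gr d = h.eigenspace (2 * d - p : k)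

theorem mapsTo_pow_of_forall_mapsTo_succ (hf : ∀ d, Set.MapsTo f (gr d) (gr (d + 1))) (m d : ℕ) :
    Set.MapsTo (f ^ m) (gr d) (gr (d + m)) := by
  induction m with
  | zero => exact Set.mapsTo_id _
  | succ m ih =>
    rw [pow_succ', Module.End.coe_mul]
    exact (hf (d + m)).comp ih

theorem IsSLEnd.hasHardLefschetz [FiniteDimensional k T] (hsl : IsSLEnd gr f)
    (hf : ∀ d, Set.MapsTo f (gr d) (gr (d + 1))) (hsym : HasSymmetricHilbertFunction gr p) :
    HasHardLefschetz gr p f := by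
  intro d m hdm
  have hrank := hsym d (by omega)
  rw [show p - d = d + m by omega] at hrank
  exact bijOn_of_injOn_or_surjOn (mapsTo_pow_of_forall_mapsTo_succ hf m d) hrank
    ((hsl m d).imp_left fun hinj ↦
      LinearMap.disjoint_ker_iff_injOn.1 (LinearMap.disjoint_ker.2 hinj))

namespace HasHardLefschetz

theorem hasSymmetricHilbertFunction (hL : HasHardLefschetz gr p f) :
    HasSymmetricHilbertFunction gr p := by
  intro d hd
  rcases le_total (2 * d) p with h | h
  · have hrank := finrank_eq_of_bijOn (hL d (p - 2 * d) (by omega))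
    rwa [show d + (p - 2 * d) = p - d by omega] at hrank
  · have hrank := finrank_eq_of_bijOn (hL (p - d) (2 * d - p) (by omega))
    rw [show p - d + (2 * d - p) = d by omega] at hrank
    exact hrank.symm

theorem eq_zero_of_pow_apply_eq_zero (hL : HasHardLefschetz gr p f) {a d : ℕ}
    (h : 2 * d + a ≤ p) {x : T} (hx : x ∈ gr d) (hx0 : (f ^ a) x = 0) : x = 0 := by
  refine (hL d (p - 2 * d) (by omega)).injOn hx (zero_mem (gr d)) ?_
  rw [show p - 2 * d = p - 2 * d - a + a by omega, pow_add, Module.End.mul_apply, hx0, map_zero,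
    map_zero]

theorem surjOn_pow (hL : HasHardLefschetz gr p f) (hf : ∀ d, Set.MapsTo f (gr d) (gr (d + 1)))
    {a d : ℕ} (h : p ≤ 2 * d + a) (had : d + a ≤ p) :
    Set.SurjOn (f ^ a) (gr d) (gr (d + a)) := by
  intro w hw
  obtain ⟨c, hc⟩ : ∃ c, c + (d + a) = p := ⟨p - (d + a), by omega⟩
  obtain ⟨b, rfl⟩ : ∃ b, d = c + b := ⟨d - c, by omega⟩
  obtain ⟨x, hx, rfl⟩ := (hL c (b + a) (by omega)).surjOn (by rwa [← add_assoc])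
  refine ⟨(f ^ b) x, mapsTo_pow_of_forall_mapsTo_succ hf b c hx, ?_⟩
  rw [add_comm b a, pow_add, Module.End.mul_apply]

theorem isSLEnd (hL : HasHardLefschetz gr p f) (hf : ∀ d, Set.MapsTo f (gr d) (gr (d + 1)))
    (htop : ∀ e, p < e → gr e = ⊥) : IsSLEnd gr f := by
  intro a d
  rcases le_total (2 * d + a) p with h | h
  · exact .inl fun x hx hx0 ↦ hL.eq_zero_of_pow_apply_eq_zero h hx hx0
  · refine .inr fun w hw ↦ ?_
    rcases le_or_gt (d + a) p with had | had
    · exact hL.surjOn_pow hf h had hw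
    · rw [htop _ had, Submodule.mem_bot] at hw
      exact ⟨0, zero_mem _, by rw [hw, map_zero]⟩

end HasHardLefschetz

theorem isWeightGrading_of_forall_le [CharZero k] {h : Module.End k T} (htop : ⨆ d, gr d = ⊤)
    (hle : ∀ d : ℕ, gr d ≤ h.eigenspace (2 * d - p : k)) : IsWeightGrading gr p h := by
  have hinj : Function.Injective fun d : ℕ ↦ (2 * d - p : k) := fun d e hde ↦ by
    simpa using hde
  exact congrFun (((h.eigenspaces_iSupIndep.comp hinj).le_iff_eq_of_iSup_eq_top htop).1 hle)

theorem IsWeightGrading.mapsTo_succ {h e : Module.End k T} (hw : IsWeightGrading gr p h)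
    (he : ⁅h, e⁆ = (2 : k) • e) (d : ℕ) : Set.MapsTo e (gr d) (gr (d + 1)) := by
  rw [hw, hw]
  convert mapsTo_eigenspace_of_lie_eq_smul he (2 * d - p : k) using 3
  push_cast
  ring

theorem Sl2Relations.hasHardLefschetz [CharZero k] [FiniteDimensional k T]
    {h e f : Module.End k T} (t : Sl2Relations h e f) (hw : IsWeightGrading gr p h) :
    HasHardLefschetz gr p e := by
  rintro d m rfl
  rw [hw, hw]
  convert t.bijOn_pow_e m using 3 <;> push_cast <;> ring

end GradedEndomorphisms

section LoweringOperator

variable {k T : Type*} [Field k] [AddCommGroup T] [Module k T] {gr : ℕ → Submodule k T}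
  {p : ℕ} {f : Module.End k T} (hgr : DirectSum.IsInternal gr) (htop : ∀ e, p < e → gr e = ⊥)

/-- The endomorphism acting on the degree `d` piece as the scalar `2 * d - p`, provided that `gr`
vanishes in degrees greater than `p`. -/
noncomputable def weightOperator (p : ℕ) : Module.End k T :=
  ∑ d ∈ Finset.range (p + 1), (2 * d - p : k) • homogeneousProj hgr d

include htop in
theorem weightOperator_apply_of_mem {d : ℕ} {x : T} (hx : x ∈ gr d) :
    weightOperator hgr p x = (2 * d - p : k) • x := by
  rcases le_or_gt d p with hd | hd
  · rw [weightOperator, LinearMap.sum_apply, Finset.sum_eq_single d]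
    · rw [LinearMap.smul_apply, homogeneousProj_of_mem hgr hx]
    · intro e _ hed
      rw [LinearMap.smul_apply, homogeneousProj_of_mem_ne hgr hed.symm hx, smul_zero]
    · simp [hd]
  · rw [htop d hd, Submodule.mem_bot] at hx
    rw [hx, map_zero, smul_zero]

include htop in
theorem isWeightGrading_weightOperator [CharZero k] :
    IsWeightGrading gr p (weightOperator hgr p) :=
  isWeightGrading_of_forall_le hgr.submodule_iSup_eq_top fun _ _ hx ↦
    Module.End.mem_eigenspace_iff.2 (weightOperator_apply_of_mem hgr htop hx)

include htop in
theorem lie_weightOperator (hf : ∀ d, Set.MapsTo f (gr d) (gr (d + 1))) :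
    ⁅weightOperator hgr p, f⁆ = (2 : k) • f := by
  refine ext_of_isInternal hgr fun d x hx ↦ ?_
  rw [Ring.lie_def, LinearMap.sub_apply, Module.End.mul_apply, Module.End.mul_apply,
    weightOperator_apply_of_mem hgr htop hx, weightOperator_apply_of_mem hgr htop (hf d hx),
    map_smul, ← sub_smul, LinearMap.smul_apply]
  congr 1
  push_cast
  ring

include htop in
theorem HasHardLefschetz.exists_inverse_pow (hL : HasHardLefschetz gr p f)
    (hf : ∀ d, Set.MapsTo f (gr d) (gr (d + 1))) {d m : ℕ} (hdm : 2 * d + m = p) :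
    ∃ g : Module.End k T, g * f ^ m = homogeneousProj hgr d ∧
      f ^ m * g = homogeneousProj hgr (d + m) ∧
      ⁅weightOperator hgr p, g⁆ = (-2 * m : k) • g := by
  let φ : gr d ≃ₗ[k] gr (d + m) := linearEquivOfBijOn (hL d m hdm)
  let g : Module.End k T := (gr d).subtype ∘ₗ φ.symm ∘ₗ homogeneousComponent hgr (d + m)
  have hg_ne {e : ℕ} (he : e ≠ d + m) {x : T} (hx : x ∈ gr e) : g x = 0 := by
    simp [g, homogeneousComponent_of_mem_ne hgr he hx]
  refine ⟨g, ext_of_isInternal hgr fun e x hx ↦ ?_, LinearMap.ext fun x ↦ ?_,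
    ext_of_isInternal hgr fun e x hx ↦ ?_⟩
  · have hfx : (f ^ m) x ∈ gr (e + m) := mapsTo_pow_of_forall_mapsTo_succ hf m e hx
    rw [Module.End.mul_apply]
    rcases eq_or_ne e d with rfl | he
    · have hφ : φ.symm ⟨(f ^ m) x, hfx⟩ = ⟨x, hx⟩ := φ.symm_apply_apply ⟨x, hx⟩
      simp [g, homogeneousComponent_of_mem hgr hfx, homogeneousProj_of_mem hgr hx, hφ]
    · rw [hg_ne (by omega) hfx, homogeneousProj_of_mem_ne hgr he hx]
  · exact congrArg Subtype.val (φ.apply_symm_apply (homogeneousComponent hgr (d + m) x))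
  · have hgx : g x ∈ gr d := Subtype.prop _
    rw [Ring.lie_def, LinearMap.sub_apply, Module.End.mul_apply, Module.End.mul_apply,
      weightOperator_apply_of_mem hgr htop hx, weightOperator_apply_of_mem hgr htop hgx,
      map_smul, ← sub_smul, LinearMap.smul_apply]
    rcases eq_or_ne e (d + m) with rfl | he
    · congr 1
      push_cast
      ring
    · rw [hg_ne he hx, smul_zero, smul_zero]

include htop in
theorem HasHardLefschetz.exists_lie_eq_sub (hL : HasHardLefschetz gr p f)
    (hf : ∀ d, Set.MapsTo f (gr d) (gr (d + 1))) {d m : ℕ} (hdm : 2 * d + m = p) :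
    ∃ a : Module.End k T, ⁅weightOperator hgr p, a⁆ = (-2 : k) • a ∧
      ⁅f, a⁆ = homogeneousProj hgr (d + m) - homogeneousProj hgr d := by
  obtain ⟨g, hgf, hfg, hweight⟩ := hL.exists_inverse_pow hgr htop hf hdm
  refine ⟨∑ i ∈ Finset.range m, f ^ i * g * f ^ (m - 1 - i), ?_, ?_⟩
  · have hpow (i : ℕ) := lie_pow_of_lie_eq_smul (lie_weightOperator hgr htop hf) i
    rw [lie_sum, Finset.smul_sum]
    refine Finset.sum_congr rfl fun i hi ↦ ?_
    rw [lie_mul_of_lie_eq_smul (lie_mul_of_lie_eq_smul (hpow i) hweight) (hpow _)]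
    congr 1
    obtain ⟨j, rfl⟩ : ∃ j, m = i + j + 1 := ⟨m - 1 - i, by grind⟩
    rw [show i + j + 1 - 1 - i = j by omega]
    push_cast
    ring
  · rw [lie_sum_pow_mul_mul_pow, Ring.lie_def, hfg, hgf]

theorem sum_smul_sub_homogeneousProj :
    ∑ d ∈ Finset.range (p + 1), ((p - 2 * d : ℕ) : k) •
      (homogeneousProj hgr (p - d) - homogeneousProj hgr d) = weightOperator hgr p := by
  have hreflect :
      ∑ d ∈ Finset.range (p + 1), ((p - 2 * d : ℕ) : k) • homogeneousProj hgr (p - d) =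
      ∑ d ∈ Finset.range (p + 1), ((2 * d - p : ℕ) : k) • homogeneousProj hgr d := by
    rw [← Finset.sum_range_reflect]
    refine Finset.sum_congr rfl fun d hd ↦ ?_
    rw [Finset.mem_range] at hd
    rw [show p + 1 - 1 - d = p - d by omega, show p - (p - d) = d by omega,
      show p - 2 * (p - d) = 2 * d - p by omega]
  simp_rw [smul_sub, Finset.sum_sub_distrib, hreflect, ← Finset.sum_sub_distrib, ← sub_smul]
  refine Finset.sum_congr rfl fun d _ ↦ ?_
  congr 1
  rcases le_total (2 * d) p with h | h <;> simp [Nat.sub_eq_zero_of_le h, Nat.cast_sub h]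

include htop in
theorem HasHardLefschetz.exists_sl2Relations (hL : HasHardLefschetz gr p f)
    (hf : ∀ d, Set.MapsTo f (gr d) (gr (d + 1))) :
    ∃ f' : Module.End k T, Sl2Relations (weightOperator hgr p) f f' := by
  -- Degrees `d` with `2 * d > p` get the coefficient `p - 2 * d = 0`, so `a d` is irrelevant there.
  have hlower (d : ℕ) : ∃ a : Module.End k T, ⁅weightOperator hgr p, a⁆ = (-2 : k) • a ∧
      (2 * d ≤ p → ⁅f, a⁆ = homogeneousProj hgr (p - d) - homogeneousProj hgr d) := by
    rcases le_or_gt (2 * d) p with h | h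
    · obtain ⟨a, ha, hfa⟩ := hL.exists_lie_eq_sub hgr htop hf (d := d) (m := p - 2 * d) (by omega)
      exact ⟨a, ha, fun _ ↦ by rw [hfa, show d + (p - 2 * d) = p - d by omega]⟩
    · exact ⟨0, by simp, fun h' ↦ absurd h' h.not_ge⟩
  choose a ha hfa using hlower
  refine ⟨∑ d ∈ Finset.range (p + 1), ((p - 2 * d : ℕ) : k) • a d, ?_, ?_, ?_⟩
  · rw [lie_sum, ← sum_smul_sub_homogeneousProj hgr]
    refine Finset.sum_congr rfl fun d _ ↦ ?_
    rw [lie_smul]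
    rcases le_or_gt (2 * d) p with h | h
    · rw [hfa d h]
    · rw [Nat.sub_eq_zero_of_le h.le, Nat.cast_zero, zero_smul, zero_smul]
  · rw [lie_weightOperator hgr htop hf, ofNat_smul_eq_nsmul k 2 f]
  · rw [← ofNat_smul_eq_nsmul k 2, ← neg_smul, lie_sum, Finset.smul_sum]
    refine Finset.sum_congr rfl fun d _ ↦ ?_
    rw [lie_smul, ha, smul_comm]

end LoweringOperator

end CommutatorBracket

section TensorGrading

variable {k M N : Type*} [Field k] [AddCommGroup M] [Module k M] [AddCommGroup N] [Module k N]
  {grM : ℕ → Submodule k M} {grN : ℕ → Submodule k N} {p q : ℕ}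

theorem tmul_mem_tensorGr {d e : ℕ} {x : M} {y : N} (hx : x ∈ grM d) (hy : y ∈ grN e) :
    x ⊗ₜ[k] y ∈ tensorGr grM grN (d + e) :=
  Submodule.subset_span ⟨d, e, x, y, rfl, hx, hy, rfl⟩

theorem iSup_tensorGr_eq_top (hM : ⨆ d, grM d = ⊤) (hN : ⨆ d, grN d = ⊤) :
    ⨆ e, tensorGr grM grN e = ⊤ := by
  rw [eq_top_iff, ← TensorProduct.map₂_mk_top_top_eq_top, ← hM, ← hN, Submodule.map₂_iSup_left,
    iSup_le_iff]
  intro d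
  rw [Submodule.map₂_iSup_right, iSup_le_iff]
  exact fun e ↦ Submodule.map₂_le.2 fun _ hx _ hy ↦
    Submodule.mem_iSup_of_mem (d + e) (tmul_mem_tensorGr hx hy)

theorem isSocleDegree_tensorGr (hp : IsSocleDegree grM p) (hq : IsSocleDegree grN q) :
    IsSocleDegree (tensorGr grM grN) (p + q) := by
  refine ⟨?_, fun e he ↦ (Submodule.span_eq_bot).2 ?_⟩
  · obtain ⟨x, hx, hx0⟩ := (Submodule.ne_bot_iff _).1 hp.1
    obtain ⟨y, hy, hy0⟩ := (Submodule.ne_bot_iff _).1 hq.1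
    exact (Submodule.ne_bot_iff _).2 ⟨x ⊗ₜ y, tmul_mem_tensorGr hx hy, tmul_ne_zero hx0 hy0⟩
  · rintro _ ⟨d₁, d₂, x, y, rfl, hx, hy, rfl⟩
    rcases lt_or_ge p d₁ with h₁ | h₁
    · rw [hp.2 d₁ h₁, Submodule.mem_bot] at hx
      rw [hx, TensorProduct.zero_tmul]
    · rw [hq.2 d₂ (by omega), Submodule.mem_bot] at hy
      rw [hy, TensorProduct.tmul_zero]

theorem isWeightGrading_tensorGr [CharZero k] {h : Module.End k M} {h' : Module.End k N}
    (hM : ⨆ d, grM d = ⊤) (hN : ⨆ d, grN d = ⊤) (hh : IsWeightGrading grM p h)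
    (hh' : IsWeightGrading grN q h') :
    IsWeightGrading (tensorGr grM grN) (p + q) (h.rTensor N + h'.lTensor M) := by
  refine isWeightGrading_of_forall_le (iSup_tensorGr_eq_top hM hN) fun _ ↦
    Submodule.span_le.2 ?_
  rintro _ ⟨d₁, d₂, x, y, rfl, hx, hy, rfl⟩
  rw [hh, Module.End.mem_eigenspace_iff] at hx
  rw [hh', Module.End.mem_eigenspace_iff] at hy
  rw [SetLike.mem_coe, Module.End.mem_eigenspace_iff, LinearMap.add_apply,
    LinearMap.rTensor_tmul, LinearMap.lTensor_tmul, hx, hy, ← TensorProduct.smul_tmul',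
    TensorProduct.tmul_smul, ← add_smul]
  congr 1
  push_cast
  ring

end TensorGrading

theorem statement7_general {k M N : Type*} [Field k] [CharZero k]
    [AddCommGroup M] [Module k M] [FiniteDimensional k M]
    [AddCommGroup N] [Module k N] [FiniteDimensional k N]
    {grM : ℕ → Submodule k M} {grN : ℕ → Submodule k N}
    (hgrM : DirectSum.IsInternal grM) (hgrN : DirectSum.IsInternal grN)
    {f : Module.End k M} (hf : ∀ d, Set.MapsTo f (grM d) (grM (d + 1))) (hslf : IsSLEnd grM f)
    {g : Module.End k N} (hg : ∀ d, Set.MapsTo g (grN d) (grN (d + 1))) (hslg : IsSLEnd grN g)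
    {p q : ℕ} (hp : IsSocleDegree grM p) (hsymM : HasSymmetricHilbertFunction grM p)
    (hq : IsSocleDegree grN q) (hsymN : HasSymmetricHilbertFunction grN q) :
    IsSLEnd (tensorGr grM grN) (f.rTensor N + g.lTensor M) ∧
      IsSocleDegree (tensorGr grM grN) (p + q) ∧
      HasSymmetricHilbertFunction (tensorGr grM grN) (p + q) := by
  obtain ⟨f', tM⟩ := (hslf.hasHardLefschetz hf hsymM).exists_sl2Relations hgrM hp.2 hf
  obtain ⟨g', tN⟩ := (hslg.hasHardLefschetz hg hsymN).exists_sl2Relations hgrN hq.2 hg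
  have hweight := isWeightGrading_tensorGr hgrM.submodule_iSup_eq_top hgrN.submodule_iSup_eq_top
    (isWeightGrading_weightOperator hgrM hp.2) (isWeightGrading_weightOperator hgrN hq.2)
  have hsocle := isSocleDegree_tensorGr hp hq
  have hL := (tM.tensor tN).hasHardLefschetz hweight
  exact ⟨hL.isSLEnd (hweight.mapsTo_succ (tM.tensor tN).lie_h_e_smul) hsocle.2, hsocle,
    hL.hasSymmetricHilbertFunction⟩

theorem IsSLAction.isSLEnd_lsmul {k A T : Type*} [Field k] [CommRing A] [Algebra k A]
    [AddCommGroup T] [Module k T] [Module A T] [IsScalarTower k A T] {gr : ℕ → Submodule k T}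
    {z : A} (hz : IsSLAction gr z) : IsSLEnd gr (Algebra.lsmul k k T z) := by
  simpa only [IsSLAction, IsSLEnd, ← map_pow, Algebra.lsmul_coe] using hz

section PolynomialAction

variable {k : Type*} [Field k] {n : ℕ} {M N : Type*}
  [AddCommGroup M] [Module k M] [Module (MvPolynomial (Fin n) k) M]
  [IsScalarTower k (MvPolynomial (Fin n) k) M]
  [AddCommGroup N] [Module k N] [Module (MvPolynomial (Fin n) k) N]
  [IsScalarTower k (MvPolynomial (Fin n) k) N]

theorem IsGrading.mapsTo_lsmul {gr : ℕ → Submodule k M} (hgr : IsGrading k n gr)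
    {l : MvPolynomial (Fin n) k} (hl : l ∈ homogeneousSubmodule (Fin n) k 1) (d : ℕ) :
    Set.MapsTo (Algebra.lsmul k k M l) (gr d) (gr (d + 1)) := fun x hx ↦ by
  simpa only [add_comm, Algebra.lsmul_coe, SetLike.mem_coe] using hgr.2 1 d l hl x hx

theorem tensorAct_tmul_one_add_one_tmul (r s : MvPolynomial (Fin n) k) :
    tensorAct k M N (r ⊗ₜ 1 + 1 ⊗ₜ s) =
      (Algebra.lsmul k k M r).rTensor N + (Algebra.lsmul k k N s).lTensor M := by
  ext x y
  simp [tensorAct, Module.endTensorEndAlgHom_apply]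

end PolynomialAction

/-- Let `l, y ∈ R_1` be strong Lefschetz elements for the finite length
graded `R`-modules `M` and `N` respectively.  If the Hilbert functions of `M` and `N` are
both symmetric, then `M ⊗_k N` has the strong Lefschetz property (witnessed by a linear
form of `R ⊗_k R`) and its Hilbert function is symmetric. -/
theorem statement7 {k : Type} [Field k] [CharZero k] {n : ℕ} {M N : Type}
    [AddCommGroup M] [Module k M] [Module (MvPolynomial (Fin n) k) M]
    [IsScalarTower k (MvPolynomial (Fin n) k) M]
    [Module.Finite (MvPolynomial (Fin n) k) M] [FiniteDimensional k M]
    [AddCommGroup N] [Module k N] [Module (MvPolynomial (Fin n) k) N]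
    [IsScalarTower k (MvPolynomial (Fin n) k) N]
    [Module.Finite (MvPolynomial (Fin n) k) N] [FiniteDimensional k N]
    (grM : ℕ → Submodule k M) (hgrM : IsGrading k n grM)
    (grN : ℕ → Submodule k N) (hgrN : IsGrading k n grN)
    (l : MvPolynomial (Fin n) k) (hl : l ∈ homogeneousSubmodule (Fin n) k 1)
    (hSLM : IsSLAction grM l)
    (y : MvPolynomial (Fin n) k) (hy : y ∈ homogeneousSubmodule (Fin n) k 1)
    (hSLN : IsSLAction grN y)
    (pM : ℕ) (hpM : IsSocleDegree grM pM)
    (hsymM : ∀ d : ℕ, d ≤ pM →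
      Module.finrank k (grM d) = Module.finrank k (grM (pM - d)))
    (pN : ℕ) (hpN : IsSocleDegree grN pN)
    (hsymN : ∀ d : ℕ, d ≤ pN →
      Module.finrank k (grN d) = Module.finrank k (grN (pN - d))) :
    (∃ w : (MvPolynomial (Fin n) k) ⊗[k] (MvPolynomial (Fin n) k),
      IsLinearForm2 w ∧ IsSLEnd (tensorGr grM grN) (tensorAct k M N w)) ∧
    (∃ q : ℕ, IsSocleDegree (tensorGr grM grN) q ∧
      ∀ d : ℕ, d ≤ q → Module.finrank k (tensorGr grM grN d) =
        Module.finrank k (tensorGr grM grN (q - d))) := by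
  have h := statement7_general hgrM.1 hgrN.1 (hgrM.mapsTo_lsmul hl) hSLM.isSLEnd_lsmul
    (hgrN.mapsTo_lsmul hy) hSLN.isSLEnd_lsmul hpM hsymM hpN hsymN
  rw [← tensorAct_tmul_one_add_one_tmul] at h
  exact ⟨⟨_, ⟨l, y, hl, hy, rfl⟩, h.1⟩, pM + pN, h.2⟩
end

section
/- Let k have characteristic zero, R = k[x_1,…,x_n], and let I = (x_1^{a_1},…,x_n^{a_n}) with all a_i ≥ 1 be a monomial complete intersection. Then R/I has the strong Lefschetz property. -/
/-!
On the polynomial ring let `e` be multiplication by `x_1 + … + x_n` and let `f` be the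
second-order operator `∑ i, ((a_i - 1) ∂_i - x_i ∂_i²)`. The operator `f` preserves the ideal
`(x_1^{a_1}, …, x_n^{a_n})`, because the coefficient `m (a_i - m)` of `x_i^{m-1}` in `f (x_i^m)`
vanishes at `m = a_i`, and by Euler's identity `[e, f]` acts on forms of degree `d` as the
scalar `2d - N`, where `N = ∑ i, (a_i - 1)`. Hence the quotient is a representation of `sl₂` whose
weight spaces are its graded pieces. Along a string starting at a lowest or highest weight vector,
the composites `f ^ m * e ^ m` and `e ^ m * f ^ m` are scalars that do not vanish until the string
passes the reflected weight. In characteristic zero this makes `e ^ m` injective on degree `d` when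
`2d + m ≤ N` (induction on `d`) and surjective onto degree `d + m` when `2d + m ≥ N` (descending
induction on the degree `d + m`).
-/

open MvPolynomial TensorProduct

/-- The grading on the quotient `k[x_1, …, x_n]/I` induced by the standard grading:
the degree `e` piece is the image of the homogeneous polynomials of degree `e`. -/
noncomputable def quotGr {k : Type*} [Field k] {σ : Type*} (I : Ideal (MvPolynomial σ k))
    (e : ℕ) : Submodule k (MvPolynomial σ k ⧸ I) :=
  Submodule.map (Ideal.Quotient.mkₐ k I).toLinearMap (homogeneousSubmodule σ k e)

section WeightString

variable {R M : Type*} [CommRing R] [AddCommGroup M] [Module R M] {e f : Module.End R M}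
  {μ : R} {v : M} {m : ℕ}

lemma apply_pow_succ_apply_of_lie_apply
    (hlie : ∀ i ≤ m, ⁅e, f⁆ ((f ^ i) v) = (μ - 2 * i) • (f ^ i) v) :
    e ((f ^ (m + 1)) v) = (f ^ (m + 1)) (e v) + ((m + 1) * (μ - m)) • (f ^ m) v := by
  have e_f (w : M) : e (f w) = f (e w) + ⁅e, f⁆ w := by
    simp [Ring.lie_def]
  induction m with
  | zero => simpa [e_f] using hlie 0 le_rfl
  | succ m ih =>
    calc e ((f ^ (m + 1 + 1)) v)
        = f (e ((f ^ (m + 1)) v)) + ⁅e, f⁆ ((f ^ (m + 1)) v) := by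
          rw [pow_succ' f (m + 1), Module.End.mul_apply, e_f]
      _ = (f ^ (m + 1 + 1)) (e v) + ((m + 1) * (μ - m)) • (f ^ (m + 1)) v
            + (μ - 2 * (m + 1 : ℕ)) • (f ^ (m + 1)) v := by
          rw [ih fun i hi ↦ hlie i (by lia), hlie _ le_rfl, map_add, map_smul]
          simp only [pow_succ' f, Module.End.mul_apply]
      _ = _ := by
          push_cast
          module

lemma pow_apply_pow_apply_of_lie_apply (hv : e v = 0)
    (hlie : ∀ i ≤ m, ⁅e, f⁆ ((f ^ i) v) = (μ - 2 * i) • (f ^ i) v) :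
    (e ^ m) ((f ^ m) v) = (∏ i ∈ Finset.range m, (i + 1) * (μ - i)) • v := by
  induction m with
  | zero => simp
  | succ m ih =>
    rw [pow_succ e, Module.End.mul_apply,
      apply_pow_succ_apply_of_lie_apply fun i hi ↦ hlie i (by lia), hv, map_zero, zero_add,
      map_smul, ih fun i hi ↦ hlie i (by lia), smul_smul, Finset.prod_range_succ, mul_comm]

end WeightString

lemma prod_range_succ_mul_sub_ne_zero {R : Type*} [CommRing R] [IsDomain R] [CharZero R] {μ : ℤ}
    {m : ℕ} (hm : m ≤ μ) : ∏ i ∈ Finset.range m, ((i : R) + 1) * ((μ : R) - i) ≠ 0 := by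
  refine Finset.prod_ne_zero_iff.mpr fun i hi ↦ ?_
  have him := Finset.mem_range.mp hi
  exact mul_ne_zero i.cast_add_one_ne_zero (sub_ne_zero.mpr (mod_cast (by lia : μ ≠ i)))

/-- The operators `e` and `f` make a graded module into a weight module for `sl₂`: `e` raises the
degree by one, `f` lowers it by one, and `[e, f]` acts on degree `d` as the scalar `2 d - N`.
Degrees are natural numbers, so `f` is required to vanish in degree `0`, and all degrees above `N`
are required to be zero. -/
structure IsLefschetzPair {R V : Type*} [CommRing R] [AddCommGroup V] [Module R V]
    (gr : ℕ → Submodule R V) (N : ℤ) (e f : Module.End R V) : Prop where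
  raise_mem {d : ℕ} {v : V} : v ∈ gr d → e v ∈ gr (d + 1)
  lower_mem {d : ℕ} {v : V} : v ∈ gr (d + 1) → f v ∈ gr d
  lower_eq_zero {v : V} : v ∈ gr 0 → f v = 0
  lie_apply {d : ℕ} {v : V} : v ∈ gr d → ⁅e, f⁆ v = ((2 * d - N : ℤ) : R) • v
  eq_zero_of_lt {d : ℕ} {v : V} : N < d → v ∈ gr d → v = 0

namespace IsLefschetzPair

section CommRing

variable {R V : Type*} [CommRing R] [AddCommGroup V] [Module R V] {gr : ℕ → Submodule R V} {N : ℤ}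
  {e f : Module.End R V} {d m : ℕ} {v : V}

lemma pow_raise_mem (h : IsLefschetzPair gr N e f) (hv : v ∈ gr d) (m : ℕ) :
    (e ^ m) v ∈ gr (d + m) := by
  induction m with
  | zero => exact hv
  | succ m ih =>
    rw [pow_succ', Module.End.mul_apply]
    exact h.raise_mem ih

lemma pow_lower_mem (h : IsLefschetzPair gr N e f) (hv : v ∈ gr (d + m)) : (f ^ m) v ∈ gr d := by
  induction m generalizing v with
  | zero => exact hv
  | succ m ih =>
    rw [pow_succ, Module.End.mul_apply]
    exact ih (h.lower_mem hv)

lemma lie_pow_raise (h : IsLefschetzPair gr N e f) (hv : v ∈ gr d) (i : ℕ) :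
    ⁅f, e⁆ ((e ^ i) v) = (((N - 2 * d : ℤ) : R) - 2 * i) • (e ^ i) v := by
  have hskew : ⁅f, e⁆ = -⁅e, f⁆ := by
    rw [Ring.lie_def, Ring.lie_def, neg_sub]
  rw [hskew, LinearMap.neg_apply, h.lie_apply (h.pow_raise_mem hv i), ← neg_smul]
  push_cast
  ring_nf

lemma lie_pow_lower (h : IsLefschetzPair gr N e f) (hv : v ∈ gr d) {i : ℕ} (hi : i ≤ d) :
    ⁅e, f⁆ ((f ^ i) v) = (((2 * d - N : ℤ) : R) - 2 * i) • (f ^ i) v := by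
  obtain ⟨j, rfl⟩ := Nat.exists_eq_add_of_le' hi
  rw [h.lie_apply (h.pow_lower_mem hv)]
  push_cast
  ring_nf

end CommRing

section Field

variable {k V : Type*} [Field k] [CharZero k] [AddCommGroup V] [Module k V]
  {gr : ℕ → Submodule k V} {N : ℤ} {e f : Module.End k V} {d m : ℕ} {v w : V}

lemma eq_zero_of_lower_eq_zero (h : IsLefschetzPair gr N e f) (hdm : 2 * d + m ≤ N)
    (hv : v ∈ gr d) (hfv : f v = 0) (hev : (e ^ m) v = 0) : v = 0 := by
  have hsmul := pow_apply_pow_apply_of_lie_apply (m := m) hfv fun i _ ↦ h.lie_pow_raise hv i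
  rw [hev, map_zero, eq_comm, smul_eq_zero] at hsmul
  exact hsmul.resolve_left (prod_range_succ_mul_sub_ne_zero (by lia))

lemma exists_pow_raise_eq_of_raise_eq_zero (h : IsLefschetzPair gr N e f) (hdm : N ≤ 2 * d + m)
    (hw : w ∈ gr (d + m)) (hew : e w = 0) : ∃ v ∈ gr d, (e ^ m) v = w := by
  have hsmul := pow_apply_pow_apply_of_lie_apply (m := m) hew fun i hi ↦
    h.lie_pow_lower hw (i := i) (by lia)
  have hc := prod_range_succ_mul_sub_ne_zero (R := k) (μ := 2 * (d + m : ℕ) - N) (m := m) (by lia)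
  exact ⟨_, (gr d).smul_mem _ (h.pow_lower_mem hw), by rw [map_smul, hsmul, inv_smul_smul₀ hc]⟩

theorem eq_zero_of_pow_raise_eq_zero (h : IsLefschetzPair gr N e f) (hdm : 2 * d + m ≤ N)
    (hv : v ∈ gr d) (hev : (e ^ m) v = 0) : v = 0 := by
  induction d generalizing m v with
  | zero => exact h.eq_zero_of_lower_eq_zero hdm hv (h.lower_eq_zero hv) hev
  | succ d ih =>
    have hev' : (e ^ (m + 1)) v = 0 := by rw [pow_succ', Module.End.mul_apply, hev, map_zero]
    have hefv : (e ^ (m + 1)) (f v) = 0 := by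
      have hcomm := apply_pow_succ_apply_of_lie_apply (m := m) fun i _ ↦ h.lie_pow_raise hv i
      simpa [hev, hev'] using hcomm.symm
    exact h.eq_zero_of_lower_eq_zero hdm hv (ih (by lia) (h.lower_mem hv) hefv) hev

theorem exists_pow_raise_eq (h : IsLefschetzPair gr N e f) (hdm : N ≤ 2 * d + m)
    (hw : w ∈ gr (d + m)) : ∃ v ∈ gr d, (e ^ m) v = w := by
  induction hc : (N + 1 - (d + m)).toNat generalizing m w with
  | zero => exact ⟨0, zero_mem _, by rw [map_zero, h.eq_zero_of_lt (by lia) hw]⟩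
  | succ c ih =>
    obtain ⟨v, hv, hev⟩ := ih (m := m + 1) (by lia) (h.raise_mem hw) (by lia)
    have hw' : w - (e ^ m) v ∈ gr (d + m) := sub_mem hw (h.pow_raise_mem hv m)
    have hew' : e (w - (e ^ m) v) = 0 := by
      rw [map_sub, ← hev, pow_succ', Module.End.mul_apply, sub_self]
    obtain ⟨u, hu, heu⟩ := h.exists_pow_raise_eq_of_raise_eq_zero hdm hw' hew'
    exact ⟨u + v, add_mem hu hv, by rw [map_add, heu, sub_add_cancel]⟩

theorem isSLAction {A : Type*} [CommRing A] [Algebra k A] [Module A V] [IsScalarTower k A V]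
    {z : A} (h : IsLefschetzPair gr N (Algebra.lsmul k k V z) f) : IsSLAction gr z := by
  have pow_lsmul (m : ℕ) (v : V) : (Algebra.lsmul k k V z ^ m) v = z ^ m • v := by
    rw [← map_pow, Algebra.lsmul_coe]
  intro m d
  rcases le_total (2 * d + m : ℤ) N with hdm | hdm
  · exact .inl fun v hv hzv ↦ h.eq_zero_of_pow_raise_eq_zero hdm hv ((pow_lsmul m v).trans hzv)
  · refine .inr fun w hw ↦ ?_
    simpa only [pow_lsmul] using h.exists_pow_raise_eq hdm hw

end Field

end IsLefschetzPair

section Derivative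

variable {R σ : Type*} [CommSemiring R] {p : MvPolynomial σ R} {d : ℕ}

lemma pderiv_X_pow_mul_self (i : σ) (m : ℕ) (p : MvPolynomial σ R) :
    pderiv i (X i ^ m * p) = X i ^ m * pderiv i p + (m : R) • (X i ^ (m - 1) * p) := by
  rw [pderiv_mul, pderiv_pow, pderiv_X_self, mul_one, add_comm, mul_assoc, smul_eq_C_mul,
    map_natCast]

lemma pderiv_X_pow_mul_of_ne {i j : σ} (hji : j ≠ i) (m : ℕ) (p : MvPolynomial σ R) :
    pderiv i (X j ^ m * p) = X j ^ m * pderiv i p := by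
  rw [pderiv_mul, pderiv_pow, pderiv_X_of_ne hji, mul_zero, zero_mul, zero_add]

lemma pderiv_eq_zero_of_isHomogeneous_zero (hp : p.IsHomogeneous 0) (i : σ) : pderiv i p = 0 := by
  rw [← totalDegree_zero_iff_isHomogeneous, totalDegree_eq_zero_iff_eq_C] at hp
  rw [hp, pderiv_C]

lemma isHomogeneous_X_mul_pderiv (hp : p.IsHomogeneous d) (i : σ) :
    (X i * pderiv i p).IsHomogeneous d := by
  cases d with
  | zero =>
    rw [pderiv_eq_zero_of_isHomogeneous_zero hp, mul_zero]
    exact isHomogeneous_zero σ R 0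
  | succ d =>
    rw [add_comm]
    exact (isHomogeneous_X R i).mul hp.pderiv

end Derivative

section MonomialIdeal

variable {R σ : Type*} [CommSemiring R]

/-- The ideal `(x_i ^ a_i)_i` of a monomial complete intersection. -/
noncomputable def monomialCIIdeal (R : Type*) [CommSemiring R] (a : σ → ℕ) :
    Ideal (MvPolynomial σ R) :=
  Ideal.span {f | ∃ i, f = X i ^ a i}

lemma monomialCIIdeal_eq_span_range (a : σ → ℕ) :
    monomialCIIdeal R a = Ideal.span (Set.range fun i ↦ X i ^ a i) := by
  simp only [monomialCIIdeal, Set.range, eq_comm]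

lemma X_pow_mul_mem_monomialCIIdeal (a : σ → ℕ) (i : σ) (p : MvPolynomial σ R) :
    X i ^ a i * p ∈ monomialCIIdeal R a :=
  Ideal.mul_mem_right _ _ (Ideal.subset_span ⟨i, rfl⟩)

lemma mem_monomialCIIdeal_iff {a : σ → ℕ} {p : MvPolynomial σ R} :
    p ∈ monomialCIIdeal R a ↔ ∀ s ∈ p.support, ∃ i, a i ≤ s i := by
  have hrange : Set.range (fun i ↦ (X i ^ a i : MvPolynomial σ R)) =
      (fun s ↦ monomial s 1) '' Set.range fun i ↦ Finsupp.single i (a i) := by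
    simp only [← Set.range_comp, Function.comp_def, X_pow_eq_monomial]
  simp [monomialCIIdeal_eq_span_range, hrange, mem_ideal_span_monomial_image]

lemma mem_monomialCIIdeal_of_isHomogeneous [Fintype σ] {a : σ → ℕ} {p : MvPolynomial σ R} {d : ℕ}
    (hp : p.IsHomogeneous d) (hd : ∑ i, ((a i : ℤ) - 1) < d) : p ∈ monomialCIIdeal R a := by
  refine mem_monomialCIIdeal_iff.mpr fun s hs ↦ ?_
  have hdeg : ∑ i, (s i : ℤ) = d := by
    rw [← of_not_not (mt hp.coeff_eq_zero (mem_support_iff.mp hs)), Finsupp.degree_eq_sum]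
    push_cast
    rfl
  obtain ⟨i, -, hi⟩ := Finset.exists_lt_of_sum_lt (hd.trans_eq hdeg.symm)
  exact ⟨i, by lia⟩

end MonomialIdeal

section Lowering

variable {R σ : Type*} [CommRing R] [Fintype σ] {a : σ → ℕ} {p : MvPolynomial σ R} {d : ℕ}

/-- The `sl₂` lowering operator `∑ i, ((a_i - 1) ∂_i - x_i ∂_i²)`; its raising partner is
multiplication by `∑ i, x_i`. -/
noncomputable def lowering (R : Type*) [CommRing R] (a : σ → ℕ) :
    Module.End R (MvPolynomial σ R) :=
  ∑ i, (((a i : R) - 1) • (pderiv i).toLinearMap -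
    LinearMap.mulLeft R (X i) ∘ₗ (pderiv i).toLinearMap ∘ₗ (pderiv i).toLinearMap)

lemma lowering_apply (a : σ → ℕ) (p : MvPolynomial σ R) :
    lowering R a p = ∑ i, (((a i : R) - 1) • pderiv i p - X i * pderiv i (pderiv i p)) := by
  simp [lowering]

lemma lowering_isHomogeneous (hp : p.IsHomogeneous (d + 1)) :
    (lowering R a p).IsHomogeneous d := by
  have hpderiv (i : σ) : (pderiv i p).IsHomogeneous d := hp.pderiv
  rw [lowering_apply]
  exact .sum _ _ _ fun i _ ↦ ((homogeneousSubmodule σ R d).smul_mem _ (hpderiv i)).sub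
    (isHomogeneous_X_mul_pderiv (hpderiv i) i)

lemma lowering_eq_zero (hp : p.IsHomogeneous 0) : lowering R a p = 0 := by
  simp [lowering_apply, pderiv_eq_zero_of_isHomogeneous_zero hp]

lemma lowering_X_pow_mul (a : σ → ℕ) (j : σ) (m : ℕ) (p : MvPolynomial σ R) :
    lowering R a (X j ^ m * p) = X j ^ m * (lowering R a p - (2 * m : R) • pderiv j p) +
      (m * (a j - m) : R) • (X j ^ (m - 1) * p) := by
  have hsum : lowering R a (X j ^ m * p) - X j ^ m * lowering R a p =
      (m * (a j - m) : R) • (X j ^ (m - 1) * p) - (2 * m : R) • (X j ^ m * pderiv j p) := by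
    rw [lowering_apply, lowering_apply, Finset.mul_sum, ← Finset.sum_sub_distrib,
      Fintype.sum_eq_single j fun i hij ↦ ?_]
    · simp only [pderiv_X_pow_mul_self, map_add, Derivation.map_smul]
      rcases m with _ | _ | m <;> push_cast [add_tsub_cancel_right] <;> algebra
    · rw [pderiv_X_pow_mul_of_ne hij.symm, pderiv_X_pow_mul_of_ne hij.symm, mul_left_comm, mul_sub,
        mul_smul_comm, sub_self]
  rw [mul_sub, mul_smul_comm]
  linear_combination hsum

lemma lowering_mem_monomialCIIdeal (hp : p ∈ monomialCIIdeal R a) :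
    lowering R a p ∈ monomialCIIdeal R a := by
  rw [monomialCIIdeal_eq_span_range, Ideal.mem_span_range_iff_exists_fun] at hp
  obtain ⟨c, rfl⟩ := hp
  rw [map_sum]
  refine Ideal.sum_mem _ fun i _ ↦ ?_
  rw [mul_comm, lowering_X_pow_mul, sub_self, mul_zero, zero_smul, add_zero]
  exact X_pow_mul_mem_monomialCIIdeal a i _

lemma sum_X_mul_lowering_sub (hp : p.IsHomogeneous d) :
    (∑ i, X i) * lowering R a p - lowering R a ((∑ i, X i) * p) =
      ((2 * d - ∑ i, ((a i : ℤ) - 1) : ℤ) : R) • p := by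
  have lowering_X_mul (j : σ) : lowering R a (X j * p) =
      X j * lowering R a p - (2 : R) • (X j * pderiv j p) + ((a j : R) - 1) • p := by
    simpa [mul_sub] using lowering_X_pow_mul a j 1 p
  simp only [Finset.sum_mul, map_sum, lowering_X_mul, Finset.sum_add_distrib,
    Finset.sum_sub_distrib, ← Finset.smul_sum, ← Finset.sum_smul, hp.sum_X_mul_pderiv]
  push_cast [Finset.sum_sub_distrib]
  module

end Lowering

section Quotient

variable {k σ : Type*} [Field k] [Fintype σ]

/-- The lowering operator induced on the quotient by `(x_i ^ a_i)_i`. -/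
noncomputable def quotLowering (k : Type*) [Field k] (a : σ → ℕ) :
    Module.End k (MvPolynomial σ k ⧸ monomialCIIdeal k a) :=
  (Submodule.Quotient.restrictScalarsEquiv k (monomialCIIdeal k a)).conj
    (Submodule.mapQ _ _ (lowering k a) fun _ ↦ lowering_mem_monomialCIIdeal)

lemma quotLowering_mk (a : σ → ℕ) (p : MvPolynomial σ k) :
    quotLowering k a (Ideal.Quotient.mk _ p) = Ideal.Quotient.mk _ (lowering k a p) :=
  rfl

theorem isLefschetzPair_quotLowering (a : σ → ℕ) :
    IsLefschetzPair (quotGr (monomialCIIdeal k a)) (∑ i, ((a i : ℤ) - 1))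
      (Algebra.lsmul k k _ (∑ i, X i : MvPolynomial σ k)) (quotLowering k a) where
  raise_mem := by
    rintro d _ ⟨p, hp, rfl⟩
    refine ⟨(∑ i, X i) * p, ?_, rfl⟩
    rw [add_comm]
    exact (IsHomogeneous.sum _ _ _ fun i _ ↦ isHomogeneous_X k i).mul hp
  lower_mem := by
    rintro d _ ⟨p, hp, rfl⟩
    exact ⟨lowering k a p, lowering_isHomogeneous hp, rfl⟩
  lower_eq_zero := by
    rintro _ ⟨p, hp, rfl⟩
    exact (quotLowering_mk a p).trans (by rw [lowering_eq_zero hp, map_zero])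
  lie_apply := by
    rintro d _ ⟨p, hp, rfl⟩
    exact congrArg (Ideal.Quotient.mk _) (sum_X_mul_lowering_sub hp)
  eq_zero_of_lt := by
    rintro d _ hd ⟨p, hp, rfl⟩
    exact Ideal.Quotient.eq_zero_iff_mem.mpr (mem_monomialCIIdeal_of_isHomogeneous hp hd)

end Quotient

theorem statement16_general {k σ : Type*} [Field k] [CharZero k] [Fintype σ] (a : σ → ℕ) :
    IsSLAction (quotGr (Ideal.span {f : MvPolynomial σ k | ∃ i : σ, f = X i ^ a i}))
      (∑ i, X i : MvPolynomial σ k) :=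
  (isLefschetzPair_quotLowering a).isSLAction

/-- Let `k` have characteristic zero, `R = k[x_1, …, x_n]`, and let
`I = (x_1^{a_1}, …, x_n^{a_n})` with all `a_i ≥ 1` be a monomial complete intersection.
Then `R/I` has the strong Lefschetz property. -/
theorem statement16 {k : Type} [Field k] [CharZero k] (n : ℕ) (a : Fin n → ℕ)
    (ha : ∀ i, 1 ≤ a i) :
    ∃ l : MvPolynomial (Fin n) k, l ∈ homogeneousSubmodule (Fin n) k 1 ∧
      IsSLAction
        (quotGr (Ideal.span {f : MvPolynomial (Fin n) k | ∃ i : Fin n, f = X i ^ a i}))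
        l :=
  ⟨∑ i, X i, .sum _ _ _ fun i _ ↦ isHomogeneous_X k i, statement16_general a⟩
end
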